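/- arXiv:1812.01332 — 13 statements merged into one kernel-verified Lean document; each statement's English description precedes it below -/
import Mathlib

section
/- Let n ≥ 1, let a : Fin n → ℝ, let ε > 0, and fix an index i. If there is no index j with a i < a j < a i + ε, then every point of S(a, ε) = {L_k : k} ∪ {T_k : k} lies on or above the line ℓ_i through L_i with slope 2·(a i) + ε; that is, for every point (x, y) in S(a, ε), y ≥ (a i)² + (2·(a i) + ε)(x − a i). Moreover L_i and T_i both lie exactly on this line. -/
theorem all_points_on_or_above_line (n : ℕ) (hn : 1 ≤ n) (a : Fin n → ℝ) (ε : ℝ)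
    (hε : 0 < ε) (i : Fin n)
    (h : ¬∃ j : Fin n, a i < a j ∧ a j < a i + ε) :
    (∀ p ∈ ({q : ℝ × ℝ | ∃ k : Fin n, q = (a k, (a k)^2)} ∪
            {q : ℝ × ℝ | ∃ k : Fin n, q = (a k + ε/2, (a k + ε/2)^2 + ε^2/4)}),
      p.2 ≥ (a i)^2 + (2 * a i + ε) * (p.1 - a i)) ∧
    (a i, (a i)^2).2 = (a i)^2 + (2 * a i + ε) * ((a i, (a i)^2).1 - a i) ∧
    (a i + ε/2, (a i + ε/2)^2 + ε^2/4).2 =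
      (a i)^2 + (2 * a i + ε) * ((a i + ε/2, (a i + ε/2)^2 + ε^2/4).1 - a i) := by
  refine ⟨?_, by ring, by ring⟩
  rintro p (⟨k, rfl⟩ | ⟨k, rfl⟩)
  · show (a k)^2 ≥ (a i)^2 + (2 * a i + ε) * (a k - a i)
    rcases le_or_gt (a k) (a i) with h1 | h1
    · nlinarith [mul_nonneg (sub_nonneg.2 h1) (by linarith : 0 ≤ a i + ε - a k)]
    · have h2 : a i + ε ≤ a k := by
        by_contra hc
        exact h ⟨k, h1, not_le.1 hc⟩
      nlinarith [mul_nonneg (sub_nonneg.2 h1.le) (sub_nonneg.2 h2)]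
  · show (a k + ε/2)^2 + ε^2/4 ≥ (a i)^2 + (2 * a i + ε) * (a k + ε/2 - a i)
    nlinarith [sq_nonneg (a k - a i)]
end

section
/- Let n ≥ 1, let a : Fin n → ℝ, and let ε > 0. If there are no indices i, j with a i < a j < a i + ε, then no point of S(a, ε) lies in the topological interior of the convex hull of S(a, ε); that is, for every p ∈ S(a, ε), p ∉ interior(convexHull ℝ S(a, ε)). -/
theorem supp_aux (S : Set (ℝ × ℝ)) (m : ℝ) (p : ℝ × ℝ)
    (hS : ∀ q ∈ S, p.2 - m * p.1 ≤ q.2 - m * q.1) : p ∉ interior (convexHull ℝ S) := by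
  intro hp
  have hsub : convexHull ℝ S ⊆ {q : ℝ × ℝ | p.2 - m * p.1 ≤ q.2 - m * q.1} := by
    refine convexHull_min (fun q hq => Set.mem_ofPred_eq ▸ hS q hq) ?_
    intro x hx y hy s t hs ht hst
    simp only [Set.mem_ofPred_eq, Prod.fst_add, Prod.snd_add, Prod.smul_fst, Prod.smul_snd,
      smul_eq_mul] at hx hy ⊢
    have h1 := mul_le_mul_of_nonneg_left hx hs
    have h2 := mul_le_mul_of_nonneg_left hy ht
    have h3 : p.2 - m * p.1 = s * (p.2 - m * p.1) + t * (p.2 - m * p.1) := by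
      rw [← add_mul, hst, one_mul]
    linarith
  have hc : Continuous (fun t : ℝ => ((p.1, p.2 - t) : ℝ × ℝ)) := by fun_prop
  have hn : (fun t : ℝ => ((p.1, p.2 - t) : ℝ × ℝ)) ⁻¹' (interior (convexHull ℝ S))
      ∈ nhds (0 : ℝ) := by
    apply (isOpen_interior.preimage hc).mem_nhds
    simpa using hp
  obtain ⟨δ, hδ, hb⟩ := Metric.mem_nhds_iff.1 hn
  have h1 : δ / 2 ∈ Metric.ball (0 : ℝ) δ := by
    rw [Metric.mem_ball, Real.dist_eq, sub_zero, abs_of_pos (by linarith)]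
    linarith
  have h2 := hsub (interior_subset (hb h1))
  simp only [Set.mem_ofPred_eq] at h2
  linarith

theorem no_point_in_interior_of_hull (n : ℕ) (hn : 1 ≤ n) (a : Fin n → ℝ) (ε : ℝ)
    (hε : 0 < ε)
    (h : ¬∃ i j : Fin n, a i < a j ∧ a j < a i + ε) :
    ∀ p ∈ ({q : ℝ × ℝ | ∃ k : Fin n, q = (a k, (a k)^2)} ∪
           {q : ℝ × ℝ | ∃ k : Fin n, q = (a k + ε/2, (a k + ε/2)^2 + ε^2/4)}),
      p ∉ interior (convexHull ℝ
        ({q : ℝ × ℝ | ∃ k : Fin n, q = (a k, (a k)^2)} ∪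
         {q : ℝ × ℝ | ∃ k : Fin n, q = (a k + ε/2, (a k + ε/2)^2 + ε^2/4)})) := by
  rintro p (⟨k, rfl⟩ | ⟨k, rfl⟩)
  · apply supp_aux _ (2 * a k)
    rintro q (⟨j, rfl⟩ | ⟨j, rfl⟩)
    · simp only
      nlinarith [sq_nonneg (a j - a k)]
    · simp only
      nlinarith [sq_nonneg (a j + ε / 2 - a k), sq_nonneg ε]
  · apply supp_aux _ (2 * (a k + ε / 2))
    rintro q (⟨j, rfl⟩ | ⟨j, rfl⟩)
    · simp only
      have h3 : 0 ≤ (a j - a k) * (a j - a k - ε) := by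
        rcases le_or_gt (a j) (a k) with h1 | h1
        · exact mul_nonneg_of_nonpos_of_nonpos (by linarith) (by linarith)
        · have h2 : a k + ε ≤ a j := by
            by_contra hc
            exact h ⟨k, j, h1, not_le.1 hc⟩
          exact mul_nonneg (by linarith) (by linarith)
      nlinarith
    · simp only
      nlinarith [sq_nonneg (a j - a k)]
end

section
/- Let ε > 0 and let a, b ∈ ℝ with a < b. Then the point T_a = (a + ε/2, (a + ε/2)² + ε²/4) lies strictly below the line through L_a = (a, a²) and T_b = (b + ε/2, (b + ε/2)² + ε²/4); that is, writing m = ((b + ε/2)² + ε²/4 − a²)/((b + ε/2) − a) for the slope of that line, one has (a + ε/2)² + ε²/4 < a² + m·(ε/2). -/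
theorem Ta_below_line_La_Tb (ε a b : ℝ) (hε : 0 < ε) (hab : a < b) :
    (a + ε/2)^2 + ε^2/4 <
      a^2 + (((b + ε/2)^2 + ε^2/4 - a^2) / ((b + ε/2) - a)) * (ε/2) := by
  have hd : 0 < (b + ε/2) - a := by linarith
  have hm : 2*a + ε < ((b + ε/2)^2 + ε^2/4 - a^2) / ((b + ε/2) - a) := by
    rw [lt_div_iff₀ hd]
    have : 0 < (b - a)^2 := pow_pos (sub_pos.mpr hab) 2
    linarith
  have := mul_lt_mul_of_pos_right hm (half_pos hε)
  linarith
end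

section
/- Let ε > 0 and let a, b ∈ ℝ with a < b < a + ε. Then the point T_a = (a + ε/2, (a + ε/2)² + ε²/4) lies in the topological interior of the convex hull of the three points L_a = (a, a²), L_b = (b, b²), and T_b = (b + ε/2, (b + ε/2)² + ε²/4); that is, T_a ∈ interior(convexHull ℝ {L_a, L_b, T_b}). -/
theorem Ta_in_interior_triangle (ε a b : ℝ) (hε : 0 < ε) (hab : a < b)
    (hb : b < a + ε) :
    ((a + ε/2, (a + ε/2)^2 + ε^2/4) : ℝ × ℝ) ∈
      interior (convexHull ℝ
        ({((a, a^2) : ℝ × ℝ), ((b, b^2) : ℝ × ℝ),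
          ((b + ε/2, (b + ε/2)^2 + ε^2/4) : ℝ × ℝ)} : Set (ℝ × ℝ))) := by
  obtain ⟨d, rfl⟩ : ∃ d, b = a + d := ⟨b - a, by ring⟩
  have hd : 0 < d := by linarith
  have hde : d < ε := by linarith
  let D : ℝ := d * ε * (d + ε) / 2
  have hD : 0 < D := by positivity
  -- unnormalised barycentric coordinates
  let f : ℝ × ℝ → ℝ := fun p => d * (p.2 - a^2 - 2*a*(p.1 - a)) - d^2 * (p.1 - a)
  let g : ℝ × ℝ → ℝ := fun p => (p.1 - a) * (d^2 + d*ε + ε^2/2)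
    - (p.2 - a^2 - 2*a*(p.1 - a)) * (d + ε/2)
  have hf : Continuous f := by fun_prop
  have hg : Continuous g := by fun_prop
  rw [mem_interior]
  refine ⟨{p | 0 < f p} ∩ {p | 0 < g p} ∩ {p | 0 < D - f p - g p}, ?_, ?_, ?_⟩
  · rintro p ⟨⟨h1, h2⟩, h3⟩
    simp only [Set.mem_setOf_eq] at h1 h2 h3
    have key := (convex_convexHull ℝ ({((a, a^2) : ℝ × ℝ), ((a + d, (a + d)^2) : ℝ × ℝ),
          ((a + d + ε/2, (a + d + ε/2)^2 + ε^2/4) : ℝ × ℝ)} : Set (ℝ × ℝ))).sum_mem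
      (t := Finset.univ) (w := ![(D - f p - g p)/D, g p / D, f p / D])
      (z := ![((a, a^2) : ℝ × ℝ), ((a + d, (a + d)^2) : ℝ × ℝ),
          ((a + d + ε/2, (a + d + ε/2)^2 + ε^2/4) : ℝ × ℝ)])
      (by
        intro i _
        fin_cases i
        · exact (div_pos h3 hD).le
        · exact (div_pos h2 hD).le
        · exact (div_pos h1 hD).le)
      (by
        simp only [Fin.sum_univ_three, Matrix.cons_val]
        field_simp
        ring)
      (by
        intro i _
        apply subset_convexHull
        fin_cases i <;> simp)
    convert key using 1
    simp only [Fin.sum_univ_three, Matrix.cons_val]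
    ext
    · simp only [Prod.fst_add, Prod.smul_fst, smul_eq_mul]
      field_simp
      simp only [f, g, D]
      ring
    · simp only [Prod.snd_add, Prod.smul_snd, smul_eq_mul]
      field_simp
      simp only [f, g, D]
      ring
  · exact ((isOpen_lt continuous_const hf).inter (isOpen_lt continuous_const hg)).inter
      (isOpen_lt continuous_const ((continuous_const.sub hf).sub hg))
  · refine ⟨⟨?_, ?_⟩, ?_⟩
    · have : 0 < d * ε * (ε - d) / 2 := by
        have := sub_pos.2 hde
        positivity
      simp only [Set.mem_setOf_eq, f]
      linarith
    · have : 0 < ε * d^2 / 2 := by positivity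
      simp only [Set.mem_setOf_eq, g]
      linarith
    · have : 0 < ε * d^2 / 2 := by positivity
      simp only [Set.mem_setOf_eq, f, g, D]
      linarith
end

section
/- Let n ≥ 1, let a : Fin n → ℝ, let ε > 0, and suppose there exist indices i, j with a i < a j < a i + ε. Then the point T_i lies in the topological interior of the convex hull of S(a, ε); in particular S(a, ε) contains a point that does not lie on the boundary of its convex hull. -/
def crossP (P Q R : ℝ × ℝ) : ℝ := (Q.1-P.1)*(R.2-P.2)-(Q.2-P.2)*(R.1-P.1)

lemma tri_interior (s : Set (ℝ × ℝ)) (A B C q : ℝ × ℝ) (hA : A ∈ s) (hB : B ∈ s) (hC : C ∈ s)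
    (h1 : 0 < crossP q B C) (h2 : 0 < crossP A q C) (h3 : 0 < crossP A B q) :
    q ∈ interior (convexHull ℝ s) := by
  rw [mem_interior]
  refine ⟨{r | 0 < crossP r B C} ∩ ({r | 0 < crossP A r C} ∩ {r | 0 < crossP A B r}), ?_, ?_,
    h1, h2, h3⟩
  · rintro r ⟨k1, k2, k3⟩
    simp only [Set.mem_setOf_eq] at k1 k2 k3
    have hsum : crossP r B C + crossP A r C + crossP A B r = crossP A B C := by
      unfold crossP; ring
    have hD : 0 < crossP A B C := by linarith
    have key := (convex_convexHull ℝ s).sum_mem (t := Finset.univ)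
      (w := ![crossP r B C / crossP A B C, crossP A r C / crossP A B C,
        crossP A B r / crossP A B C]) (z := ![A, B, C])
      (by intro i _; fin_cases i <;> simp <;> positivity)
      (by simp [Fin.sum_univ_three, ← add_div, hsum, hD.ne'])
      (by intro i _
          fin_cases i
          · exact subset_convexHull ℝ s hA
          · exact subset_convexHull ℝ s hB
          · exact subset_convexHull ℝ s hC)
    convert key using 1
    have hD' := hD.ne'
    simp only [Fin.sum_univ_three, Matrix.cons_val]
    ext
    · simp only [Prod.fst_add, Prod.smul_fst, smul_eq_mul]
      field_simp
      unfold crossP; ring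
    · simp only [Prod.snd_add, Prod.smul_snd, smul_eq_mul]
      field_simp
      unfold crossP; ring
  · unfold crossP
    refine IsOpen.inter ?_ (IsOpen.inter ?_ ?_) <;>
      exact isOpen_lt (by fun_prop) (by fun_prop)

theorem Ti_in_interior_of_hull (n : ℕ) (hn : 1 ≤ n) (a : Fin n → ℝ) (ε : ℝ)
    (hε : 0 < ε) (i j : Fin n) (hij : a i < a j) (hj : a j < a i + ε) :
    ((a i + ε/2, (a i + ε/2)^2 + ε^2/4) : ℝ × ℝ) ∈
      interior (convexHull ℝ
        ({q : ℝ × ℝ | ∃ k : Fin n, q = (a k, (a k)^2)} ∪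
         {q : ℝ × ℝ | ∃ k : Fin n, q = (a k + ε/2, (a k + ε/2)^2 + ε^2/4)})) := by
  obtain ⟨d, hd⟩ : ∃ d, a j = a i + d := ⟨a j - a i, by ring⟩
  have hd0 : 0 < d := by linarith
  have hd1 : 0 < ε - d := by linarith
  refine tri_interior _ (a i, (a i)^2) (a j, (a j)^2) (a j + ε/2, (a j + ε/2)^2 + ε^2/4) _
    (Or.inl ⟨i, rfl⟩) (Or.inl ⟨j, rfl⟩) (Or.inr ⟨j, rfl⟩) ?_ ?_ ?_
  · have : 0 < ε * d^2 / 2 := by positivity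
    simp only [crossP, hd]
    ring_nf at this ⊢
    linarith
  · have : 0 < ε * d^2 / 2 := by positivity
    simp only [crossP, hd]
    ring_nf at this ⊢
    linarith
  · have : 0 < d * ε * (ε - d) / 2 := by positivity
    simp only [crossP, hd]
    ring_nf at this ⊢
    linarith
end

section
/- Let n ≥ 1, let a : Fin n → ℝ, and let ε > 0. Then S(a, ε) contains a point lying in the topological interior of the convex hull of S(a, ε) if and only if there exist indices i, j with a i < a j < a i + ε. (This is the correctness of the reduction in Lemma 1 of the paper.) -/
lemma not_interior_aux (S : Set (ℝ × ℝ)) (m c : ℝ) (p : ℝ × ℝ)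
    (hS : ∀ q ∈ S, c ≤ q.2 - m * q.1) (hp : p.2 - m * p.1 = c) :
    p ∉ interior (convexHull ℝ S) := by
  intro h
  have hsub : convexHull ℝ S ⊆ {q : ℝ × ℝ | c ≤ q.2 - m * q.1} := by
    refine convexHull_min (fun q hq => hS q hq) ?_
    intro x hx y hy s t hs ht hst
    change c ≤ x.2 - m * x.1 at hx
    change c ≤ y.2 - m * y.1 at hy
    change c ≤ (s • x + t • y).2 - m * (s • x + t • y).1
    simp only [Prod.fst_add, Prod.snd_add, Prod.smul_fst, Prod.smul_snd,
      smul_eq_mul]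
    have h1 := mul_le_mul_of_nonneg_left hx hs
    have h2 := mul_le_mul_of_nonneg_left hy ht
    have h3 : c = s * c + t * c := by rw [← add_mul, hst, one_mul]
    linarith
  rw [mem_interior_iff_mem_nhds] at h
  have hc : Filter.Tendsto (fun δ : ℝ => (p.1, p.2 - δ)) (nhds 0) (nhds p) := by
    have : Continuous (fun δ : ℝ => (p.1, p.2 - δ)) := by fun_prop
    simpa using this.tendsto 0
  have he := (hc.eventually h).filter_mono (nhdsWithin_le_nhds (s := Set.Ioi 0))
  obtain ⟨δ, h1, h2⟩ := (he.and self_mem_nhdsWithin).exists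
  have h3 := hsub h1
  change 0 < δ at h2
  change c ≤ (p.2 - δ) - m * p.1 at h3
  linarith

/-- cross product of `B - A` and `C - A` -/
def crs (A B C : ℝ × ℝ) : ℝ := (B.1 - A.1) * (C.2 - A.2) - (B.2 - A.2) * (C.1 - A.1)

lemma interior_aux (S : Set (ℝ × ℝ)) (A B C p : ℝ × ℝ) (hA : A ∈ S) (hB : B ∈ S) (hC : C ∈ S)
    (h1 : 0 < crs A B p) (h2 : 0 < crs B C p) (h3 : 0 < crs C A p) :
    p ∈ interior (convexHull ℝ S) := by
  have hsum : ∀ q, crs A B q + crs B C q + crs C A q = crs A B C := by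
    intro q; simp only [crs]; ring
  have hD : 0 < crs A B C := by rw [← hsum p]; positivity
  rw [mem_interior]
  refine ⟨{q | 0 < crs A B q ∧ 0 < crs B C q ∧ 0 < crs C A q}, ?_, ?_, h1, h2, h3⟩
  · rintro q ⟨g1, g2, g3⟩
    have hq : q = (crs B C q / crs A B C) • A + (crs C A q / crs A B C) • B
        + (crs A B q / crs A B C) • C := by
      have hne := hD.ne'
      ext
      · simp only [Prod.fst_add, Prod.smul_fst, smul_eq_mul]
        field_simp
        simp only [crs]; ring
      · simp only [Prod.snd_add, Prod.smul_snd, smul_eq_mul]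
        field_simp
        simp only [crs]; ring
    have hw : crs B C q / crs A B C + crs C A q / crs A B C + crs A B q / crs A B C = 1 := by
      rw [← add_div, ← add_div, div_eq_one_iff_eq hD.ne', ← hsum q]; ring
    rw [hq]
    have hcv := convex_convexHull ℝ S
    have hs := subset_convexHull ℝ S
    have key := hcv.sum_mem (t := Finset.univ)
      (w := ![crs B C q / crs A B C, crs C A q / crs A B C, crs A B q / crs A B C])
      (z := ![A, B, C])
      (by intro i _; fin_cases i <;> simp <;> positivity)
      (by simpa [Fin.sum_univ_three] using hw)
      (by intro i _; fin_cases i <;> [exact hs hA; exact hs hB; exact hs hC])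
    simpa [Fin.sum_univ_three] using key
  · simp only [crs]
    refine (isOpen_lt ?_ ?_).and ((isOpen_lt ?_ ?_).and (isOpen_lt ?_ ?_)) <;> fun_prop

theorem reduction_correctness (n : ℕ) (hn : 1 ≤ n) (a : Fin n → ℝ) (ε : ℝ)
    (hε : 0 < ε) :
    (∃ p ∈ ({q : ℝ × ℝ | ∃ k : Fin n, q = (a k, (a k)^2)} ∪
            {q : ℝ × ℝ | ∃ k : Fin n, q = (a k + ε/2, (a k + ε/2)^2 + ε^2/4)}),
      p ∈ interior (convexHull ℝ
        ({q : ℝ × ℝ | ∃ k : Fin n, q = (a k, (a k)^2)} ∪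
         {q : ℝ × ℝ | ∃ k : Fin n, q = (a k + ε/2, (a k + ε/2)^2 + ε^2/4)}))) ↔
    (∃ i j : Fin n, a i < a j ∧ a j < a i + ε) := by
  constructor
  · rintro ⟨p, hp, hi⟩
    rcases hp with ⟨k, rfl⟩ | ⟨k, rfl⟩
    · exfalso
      refine not_interior_aux _ (2 * a k) (-(a k)^2) _ ?_ ?_ hi
      · rintro q (⟨j, rfl⟩ | ⟨j, rfl⟩)
        · dsimp only; nlinarith [sq_nonneg (a j - a k)]
        · dsimp only; nlinarith [sq_nonneg (a j + ε/2 - a k), sq_nonneg ε]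
      · dsimp only; ring
    · by_contra hcon
      push Not at hcon
      refine not_interior_aux _ (2 * a k + ε) (-(a k * (a k + ε))) _ ?_ ?_ hi
      · rintro q (⟨j, rfl⟩ | ⟨j, rfl⟩)
        · dsimp only
          rcases le_or_gt (a j) (a k) with h | h
          · nlinarith [mul_nonneg (sub_nonneg.2 h) (show 0 ≤ a k + ε - a j by linarith)]
          · have h' := hcon k j h
            nlinarith [mul_nonneg (sub_nonneg.2 h.le) (sub_nonneg.2 h')]
        · dsimp only; nlinarith [sq_nonneg (a j - a k)]
      · dsimp only; ring
  · rintro ⟨i, j, h1, h2⟩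
    obtain ⟨d, hd⟩ : ∃ d, d = a j - a i := ⟨_, rfl⟩
    have hj : a j = a i + d := by linarith
    have d0 : 0 < d := by linarith
    have d1 : 0 < ε - d := by linarith
    refine ⟨_, Or.inr ⟨i, rfl⟩, interior_aux _ (a i, (a i)^2) (a j, (a j)^2)
      (a j + ε/2, (a j + ε/2)^2 + ε^2/4) _ (Or.inl ⟨i, rfl⟩) (Or.inl ⟨j, rfl⟩)
      (Or.inr ⟨j, rfl⟩) ?_ ?_ ?_⟩
    · have : 0 < d * (ε - d) * (ε / 2) := by positivity
      simp only [crs, hj]; nlinarith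
    · have : 0 < d * d * (ε / 2) := by positivity
      simp only [crs, hj]; nlinarith
    · have : 0 < d * d * (ε / 2) := by positivity
      simp only [crs, hj]; nlinarith
end

section
/- Let n ≥ 1, let a : Fin n → ℝ, and let ε > 0. If there are no indices i, j with a i < a j ≤ a i + ε, then every point of S(a, ε) is an extreme point of the convex hull of S(a, ε); that is, S(a, ε) ⊆ extremePoints ℝ (convexHull ℝ S(a, ε)). -/
theorem aux_extreme (S : Set (ℝ × ℝ)) (p : ℝ × ℝ) (m : ℝ) (hp : p ∈ S)
    (hS : ∀ q ∈ S, q = p ∨ p.2 - m * p.1 < q.2 - m * q.1) :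
    p ∈ Set.extremePoints ℝ (convexHull ℝ S) := by
  have hsub : convexHull ℝ S ⊆ {q : ℝ × ℝ | q = p ∨ p.2 - m * p.1 < q.2 - m * q.1} := by
    refine convexHull_min hS ?_
    rw [convex_iff_forall_pos]
    rintro x hx y hy s t hs ht hst
    simp only [Set.mem_setOf_eq] at hx hy ⊢
    obtain rfl : s = 1 - t := by linarith
    rcases hx with rfl | hx
    · rcases hy with rfl | hy
      · left
        rw [← add_smul, hst, one_smul]
      · right
        simp only [Prod.fst_add, Prod.snd_add, Prod.smul_fst, Prod.smul_snd, smul_eq_mul]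
        nlinarith [mul_lt_mul_of_pos_left hy ht]
    · right
      simp only [Prod.fst_add, Prod.snd_add, Prod.smul_fst, Prod.smul_snd, smul_eq_mul]
      have hy' : p.2 - m * p.1 ≤ y.2 - m * y.1 := by
        rcases hy with rfl | hy
        · exact le_rfl
        · exact hy.le
      nlinarith [mul_lt_mul_of_pos_left hx hs, mul_le_mul_of_nonneg_left hy' ht.le]
  rw [mem_extremePoints_iff_left]
  refine ⟨subset_convexHull ℝ S hp, ?_⟩
  rintro x hx y hy ⟨s, t, hs, ht, hst, hxy⟩
  rcases hsub hx with hx | hx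
  · exact hx
  exfalso
  have hy' : p.2 - m * p.1 ≤ y.2 - m * y.1 := by
    rcases hsub hy with rfl | hy
    · exact le_rfl
    · exact hy.le
  have h1 := congrArg Prod.fst hxy
  have h2 := congrArg Prod.snd hxy
  simp only [Prod.fst_add, Prod.snd_add, Prod.smul_fst, Prod.smul_snd, smul_eq_mul] at h1 h2
  obtain rfl : s = 1 - t := by linarith
  have e1 := mul_lt_mul_of_pos_left hx hs
  have e2 := mul_le_mul_of_nonneg_left hy' ht.le
  have e3 : p.2 - m * p.1 = (1 - t) * (x.2 - m * x.1) + t * (y.2 - m * y.1) := by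
    rw [← h1, ← h2]; ring
  nlinarith

theorem all_extreme_points (n : ℕ) (hn : 1 ≤ n) (a : Fin n → ℝ) (ε : ℝ)
    (hε : 0 < ε)
    (h : ¬∃ i j : Fin n, a i < a j ∧ a j ≤ a i + ε) :
    ({q : ℝ × ℝ | ∃ k : Fin n, q = (a k, (a k)^2)} ∪
     {q : ℝ × ℝ | ∃ k : Fin n, q = (a k + ε/2, (a k + ε/2)^2 + ε^2/4)}) ⊆
    Set.extremePoints ℝ (convexHull ℝ
      ({q : ℝ × ℝ | ∃ k : Fin n, q = (a k, (a k)^2)} ∪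
       {q : ℝ × ℝ | ∃ k : Fin n, q = (a k + ε/2, (a k + ε/2)^2 + ε^2/4)})) := by
  push Not at h
  rintro q (⟨k, rfl⟩ | ⟨k, rfl⟩)
  · refine aux_extreme _ _ (2 * a k) (Or.inl ⟨k, rfl⟩) ?_
    rintro q (⟨j, rfl⟩ | ⟨j, rfl⟩)
    · by_cases hj : a j = a k
      · left; rw [hj]
      · right
        have := sq_pos_of_ne_zero (sub_ne_zero.2 hj)
        dsimp only
        nlinarith
    · right
      dsimp only
      nlinarith [sq_nonneg (a j + ε/2 - a k), pow_pos hε 2]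
  · obtain ⟨δ, hδ, hδε, hgap⟩ : ∃ δ > 0, δ < ε ∧ ∀ j, a k < a j → δ < a j - a k - ε := by
      have h1 : ∀ᶠ δ in nhdsWithin (0 : ℝ) (Set.Ioi 0), δ < ε :=
        nhdsWithin_le_nhds (eventually_lt_nhds hε)
      have h2 : ∀ᶠ δ in nhdsWithin (0 : ℝ) (Set.Ioi 0),
          ∀ j, a k < a j → δ < a j - a k - ε := by
        rw [Filter.eventually_all]
        intro j
        by_cases hj : a k < a j
        · have h0 : 0 < a j - a k - ε := by linarith [h k j hj]
          filter_upwards [nhdsWithin_le_nhds (eventually_lt_nhds h0)] with δ hd _ using hd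
        · exact Filter.Eventually.of_forall fun δ hh => absurd hh hj
      obtain ⟨δ, ⟨h1, h2⟩, h3⟩ := ((h1.and h2).and self_mem_nhdsWithin).exists
      exact ⟨δ, h3, h1, h2⟩
    refine aux_extreme _ _ (2 * a k + ε + δ) (Or.inr ⟨k, rfl⟩) ?_
    rintro q (⟨j, rfl⟩ | ⟨j, rfl⟩)
    · right
      dsimp only
      obtain ⟨d, hd⟩ : ∃ d, a j = a k + d := ⟨a j - a k, by ring⟩
      have key : 0 < d * (d - ε) - δ * (d - ε / 2) := by
        by_cases hj : a k < a j
        · have := hgap j hj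
          nlinarith [mul_pos (show 0 < d by linarith) (show 0 < d - ε - δ by linarith),
            mul_pos hδ hε]
        · have : d ≤ 0 := by linarith
          nlinarith [mul_nonneg (neg_nonneg.2 this) hε.le, mul_nonneg (neg_nonneg.2 this) hδ.le,
            mul_pos hδ hε, sq_nonneg d]
      rw [hd]
      nlinarith
    · by_cases hj : a j = a k
      · left; rw [hj]
      · right
        dsimp only
        obtain ⟨d, hd⟩ : ∃ d, a j = a k + d := ⟨a j - a k, by ring⟩
        have key : 0 < d * (d - δ) := by
          rcases lt_or_gt_of_ne hj with hj | hj
          · exact mul_pos_of_neg_of_neg (by linarith) (by linarith)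
          · have := hgap j hj
            exact mul_pos (by linarith) (by linarith)
        rw [hd]
        nlinarith
end

section
/- Let n ≥ 1, let a : Fin n → ℝ, let ε > 0, and suppose there exist indices i, j with a i < a j ≤ a i + ε. Then the point T_i is not an extreme point of the convex hull of S(a, ε); that is, T_i ∉ extremePoints ℝ (convexHull ℝ S(a, ε)). -/
theorem Ti_not_extreme (n : ℕ) (hn : 1 ≤ n) (a : Fin n → ℝ) (ε : ℝ)
    (hε : 0 < ε) (i j : Fin n) (hij : a i < a j) (hj : a j ≤ a i + ε) :
    ((a i + ε/2, (a i + ε/2)^2 + ε^2/4) : ℝ × ℝ) ∉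
      Set.extremePoints ℝ (convexHull ℝ
        ({q : ℝ × ℝ | ∃ k : Fin n, q = (a k, (a k)^2)} ∪
         {q : ℝ × ℝ | ∃ k : Fin n, q = (a k + ε/2, (a k + ε/2)^2 + ε^2/4)})) := by
  intro h
  obtain ⟨d, hd⟩ : ∃ d, d = a j - a i := ⟨_, rfl⟩
  have hj' : a j = a i + d := by linarith
  have hd0 : 0 < d := by linarith
  have hd1 : d ≤ ε := by linarith
  set S : Set (ℝ × ℝ) := ({q : ℝ × ℝ | ∃ k : Fin n, q = (a k, (a k)^2)} ∪
         {q : ℝ × ℝ | ∃ k : Fin n, q = (a k + ε/2, (a k + ε/2)^2 + ε^2/4)}) with hS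
  have hLi : ((a i, (a i)^2) : ℝ × ℝ) ∈ convexHull ℝ S :=
    subset_convexHull ℝ S (Or.inl ⟨i, rfl⟩)
  have hLj : ((a j, (a j)^2) : ℝ × ℝ) ∈ convexHull ℝ S :=
    subset_convexHull ℝ S (Or.inl ⟨j, rfl⟩)
  have hTj : ((a j + ε/2, (a j + ε/2)^2 + ε^2/4) : ℝ × ℝ) ∈ convexHull ℝ S :=
    subset_convexHull ℝ S (Or.inr ⟨j, rfl⟩)
  have hQ := convex_convexHull ℝ S hLj hTj (a := d/ε) (b := (ε-d)/ε) (by positivity)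
    (div_nonneg (by linarith) hε.le) (by field_simp; ring)
  have hs := h.2 hLi hQ ⟨d/(d+ε), ε/(d+ε), by positivity, by positivity,
    by field_simp, by
      rw [hj']
      ext <;> simp <;> field_simp <;> ring⟩
  have := congrArg Prod.fst hs
  simp at this
  linarith
end

section
/- Let n ≥ 1, let a : Fin n → ℝ, and let ε > 0. Then every point of S(a, ε) is an extreme point of the convex hull of S(a, ε) (i.e., S(a, ε) is in convex position) if and only if there are no indices i, j with a i < a j ≤ a i + ε. -/
theorem lex_extreme (S : Set (ℝ × ℝ)) (s c m : ℝ)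
    (hS : ∀ q ∈ S, c < q.2 - s * q.1 ∨ (q.2 - s * q.1 = c ∧ q.1 ≤ m))
    (p : ℝ × ℝ) (hp : p ∈ S) (h1 : p.1 = m) (h2 : p.2 - s * p.1 = c) :
    p ∈ Set.extremePoints ℝ (convexHull ℝ S) := by
  have hC : Convex ℝ {q : ℝ × ℝ | c < q.2 - s * q.1 ∨ (q.2 - s * q.1 = c ∧ q.1 ≤ m)} := by
    rw [convex_iff_forall_pos]
    rintro ⟨x1, y1⟩ hu ⟨x2, y2⟩ hv α β hα hβ hab
    simp only [Set.mem_setOf_eq, Prod.smul_mk, Prod.mk_add_mk, smul_eq_mul] at *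
    have hb : β = 1 - α := by linarith
    have key : α * y1 + β * y2 - s * (α * x1 + β * x2) - c
        = α * (y1 - s * x1 - c) + β * (y2 - s * x2 - c) := by rw [hb]; ring
    rcases hu with hu | ⟨hu, hu'⟩ <;> rcases hv with hv | ⟨hv, hv'⟩
    · left
      have := mul_pos hα (sub_pos.2 hu)
      have := mul_pos hβ (sub_pos.2 hv)
      linarith
    · left
      have := mul_pos hα (sub_pos.2 hu)
      rw [hv] at key
      linarith
    · left
      have := mul_pos hβ (sub_pos.2 hv)
      rw [hu] at key
      linarith
    · right
      rw [hu, hv] at key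
      refine ⟨by linarith, ?_⟩
      have := mul_le_mul_of_nonneg_left hu' hα.le
      have := mul_le_mul_of_nonneg_left hv' hβ.le
      have : α * m + β * m = m := by rw [hb]; ring
      linarith
  have hsub := convexHull_min (show S ⊆ _ from hS) hC
  rw [mem_extremePoints_iff_left]
  refine ⟨subset_convexHull ℝ S hp, ?_⟩
  rintro ⟨x1, y1⟩ hu ⟨x2, y2⟩ hv ⟨α, β, hα, hβ, hab, h⟩
  have hu := hsub hu
  have hv := hsub hv
  obtain ⟨px, py⟩ := p
  simp only [Set.mem_setOf_eq, Prod.smul_mk, Prod.mk_add_mk, smul_eq_mul, Prod.mk.injEq] at *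
  obtain ⟨hx, hy⟩ := h
  have hb : β = 1 - α := by linarith
  have key : α * (y1 - s * x1 - c) + β * (y2 - s * x2 - c) = 0 := by
    have : α * (y1 - s * x1 - c) + β * (y2 - s * x2 - c)
      = (α * y1 + β * y2) - s * (α * x1 + β * x2) - c := by rw [hb]; ring
    rw [this, hx, hy]; linarith
  have kx : α * (m - x1) + β * (m - x2) = 0 := by
    have : α * (m - x1) + β * (m - x2) = m - (α * x1 + β * x2) := by rw [hb]; ring
    rw [this, hx]; linarith
  have gu : 0 ≤ y1 - s * x1 - c := by rcases hu with h | h <;> linarith [h]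
  have gv : 0 ≤ y2 - s * x2 - c := by rcases hv with h | h <;> linarith [h]
  have e1 : y1 - s * x1 - c = 0 := by
    have := mul_nonneg hα.le gu
    have := mul_nonneg hβ.le gv
    have h0 : α * (y1 - s * x1 - c) = 0 := by linarith
    exact (mul_eq_zero.1 h0).resolve_left hα.ne'
  have e2 : y2 - s * x2 - c = 0 := by
    rw [e1] at key
    have h0 : β * (y2 - s * x2 - c) = 0 := by linarith
    exact (mul_eq_zero.1 h0).resolve_left hβ.ne'
  have f1 : x1 ≤ m := by rcases hu with h | h <;> linarith [h]
  have f2 : x2 ≤ m := by rcases hv with h | h <;> linarith [h]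
  have e3 : m - x1 = 0 := by
    have := mul_nonneg hα.le (sub_nonneg.2 f1)
    have := mul_nonneg hβ.le (sub_nonneg.2 f2)
    have h0 : α * (m - x1) = 0 := by linarith
    exact (mul_eq_zero.1 h0).resolve_left hα.ne'
  have e4 : x1 = px := by linarith
  subst e4
  exact ⟨rfl, by linarith⟩

theorem convex_position_iff (n : ℕ) (hn : 1 ≤ n) (a : Fin n → ℝ) (ε : ℝ)
    (hε : 0 < ε) :
    (({q : ℝ × ℝ | ∃ k : Fin n, q = (a k, (a k)^2)} ∪
      {q : ℝ × ℝ | ∃ k : Fin n, q = (a k + ε/2, (a k + ε/2)^2 + ε^2/4)}) ⊆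
     Set.extremePoints ℝ (convexHull ℝ
       ({q : ℝ × ℝ | ∃ k : Fin n, q = (a k, (a k)^2)} ∪
        {q : ℝ × ℝ | ∃ k : Fin n, q = (a k + ε/2, (a k + ε/2)^2 + ε^2/4)}))) ↔
    ¬∃ i j : Fin n, a i < a j ∧ a j ≤ a i + ε := by
  constructor
  · rintro h ⟨i, j, hij, hji⟩
    have hT := h (Or.inr ⟨i, rfl⟩)
    rw [mem_extremePoints_iff_left] at hT
    have hLi := subset_convexHull ℝ _ (h.trans extremePoints_convexHull_subset (Or.inl ⟨i, rfl⟩))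
    have hLj := subset_convexHull ℝ _ (h.trans extremePoints_convexHull_subset (Or.inl ⟨j, rfl⟩))
    have hTj := subset_convexHull ℝ _ (h.trans extremePoints_convexHull_subset (Or.inr ⟨j, rfl⟩))
    obtain ⟨d, hd⟩ : ∃ d, d = a j - a i := ⟨_, rfl⟩
    have hj : a j = a i + d := by linarith
    have hd0 : 0 < d := by linarith
    have hM := (convex_convexHull ℝ _) hLj hTj (a := d / ε) (b := (ε - d) / ε)
      (by positivity) (div_nonneg (by linarith) hε.le) (by field_simp; ring)
    have := hT.2 _ hLi _ hM ⟨d / (ε + d), ε / (ε + d), by positivity, by positivity,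
      by field_simp; ring, by
        simp only [Prod.smul_mk, Prod.mk_add_mk, smul_eq_mul, Prod.mk.injEq, hj]
        constructor <;> field_simp <;> ring⟩
    have := congrArg Prod.fst this
    simp only at this
    linarith
  · intro h
    rintro q (⟨k, rfl⟩ | ⟨k, rfl⟩)
    · refine lex_extreme _ (2 * a k) (-(a k)^2) (a k) ?_ _ (Or.inl ⟨k, rfl⟩) rfl (by ring)
      rintro q (⟨j, rfl⟩ | ⟨j, rfl⟩)
      · by_cases hjk : a j = a k
        · right
          simp only [hjk]
          exact ⟨by ring, le_rfl⟩
        · left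
          have := sq_pos_of_ne_zero (sub_ne_zero.2 hjk)
          simp only
          linarith
      · left
        have := sq_nonneg (a j + ε / 2 - a k)
        have := pow_pos hε 2
        simp only
        linarith
    · refine lex_extreme _ (2 * a k + ε) (-(a k)^2 - a k * ε) (a k + ε / 2) ?_ _
        (Or.inr ⟨k, rfl⟩) rfl (by ring)
      rintro q (⟨j, rfl⟩ | ⟨j, rfl⟩)
      · rcases lt_trichotomy (a j) (a k) with hjk | hjk | hjk
        · left
          simp only
          nlinarith
        · right
          simp only [hjk]
          exact ⟨by ring, by linarith⟩
        · left
          have : a k + ε < a j := by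
            by_contra hc
            exact h ⟨k, j, hjk, not_lt.1 hc⟩
          simp only
          nlinarith
      · by_cases hjk : a j = a k
        · right
          simp only [hjk]
          exact ⟨by ring, le_rfl⟩
        · left
          have := sq_pos_of_ne_zero (sub_ne_zero.2 hjk)
          simp only
          linarith
end

section
/- Let n ≥ 1, let a : Fin n → ℝ, and let ε > 0. Assume there are no indices i, j with 0 < a j − a i < ε. Define the perturbed numbers a' i = a i + ε·(i + 1)/(2n) for i ∈ Fin n (so the perturbations are ε/(2n), 2ε/(2n), …, nε/(2n)). Then there exist distinct indices i ≠ j with a i = a j if and only if there exist indices i, j with 0 < a' j − a' i < ε/2. -/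
theorem perturbation_reduction (n : ℕ) (hn : 1 ≤ n) (a : Fin n → ℝ) (ε : ℝ)
    (hε : 0 < ε)
    (h : ¬∃ i j : Fin n, 0 < a j - a i ∧ a j - a i < ε) :
    (∃ i j : Fin n, i ≠ j ∧ a i = a j) ↔
    (∃ i j : Fin n,
      0 < (a j + ε * ((j : ℝ) + 1) / (2 * n)) - (a i + ε * ((i : ℝ) + 1) / (2 * n)) ∧
      (a j + ε * ((j : ℝ) + 1) / (2 * n)) - (a i + ε * ((i : ℝ) + 1) / (2 * n)) < ε / 2) := by
  have hn0 : (0 : ℝ) < n := by exact_mod_cast hn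
  have pos : ∀ i : Fin n, 0 < ε * ((i : ℝ) + 1) / (2 * n) := fun i => by positivity
  have le : ∀ i : Fin n, ε * ((i : ℝ) + 1) / (2 * n) ≤ ε / 2 := fun i => by
    have h1 : ((i : ℝ) + 1) ≤ n := by exact_mod_cast i.2
    rw [div_le_div_iff₀ (by positivity) (by norm_num)]
    nlinarith [mul_le_mul_of_nonneg_left h1 hε.le]
  have mono : ∀ i j : Fin n, i < j →
      ε * ((i : ℝ) + 1) / (2 * n) < ε * ((j : ℝ) + 1) / (2 * n) := fun i j hij => by
    have h1 : (i : ℝ) < (j : ℝ) := by exact_mod_cast hij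
    gcongr
  constructor
  · rintro ⟨i, j, hij, ha⟩
    rcases lt_or_gt_of_ne hij with hlt | hlt
    · exact ⟨i, j, by linarith [mono i j hlt], by linarith [pos i, le j]⟩
    · exact ⟨j, i, by linarith [mono j i hlt], by linarith [pos j, le i]⟩
  · rintro ⟨i, j, h1, h2⟩
    refine ⟨i, j, ?_, ?_⟩
    · rintro rfl
      simp at h1
    · rcases lt_trichotomy (a i) (a j) with hlt | heq | hlt
      · exact absurd ⟨i, j, by linarith, by linarith [pos j, le i]⟩ h
      · exact heq
      · exact absurd ⟨j, i, by linarith, by linarith [pos i, le j]⟩ h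
end

section
/- Let n ≥ 1, let a : Fin n → ℝ, let ε > 0, and fix an index i. If a point p of S(a, ε) lies strictly below the line ℓ_i through L_i with slope 2·(a i) + ε (i.e., writing p = (x, y), y < (a i)² + (2·(a i) + ε)(x − a i)), then there exists an index j with p = L_j and a i < a j < a i + ε. -/
theorem point_below_line_is_close_L (n : ℕ) (hn : 1 ≤ n) (a : Fin n → ℝ) (ε : ℝ)
    (hε : 0 < ε) (i : Fin n) (p : ℝ × ℝ)
    (hp : p ∈ ({q : ℝ × ℝ | ∃ k : Fin n, q = (a k, (a k)^2)} ∪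
               {q : ℝ × ℝ | ∃ k : Fin n, q = (a k + ε/2, (a k + ε/2)^2 + ε^2/4)}))
    (hbelow : p.2 < (a i)^2 + (2 * a i + ε) * (p.1 - a i)) :
    ∃ j : Fin n, p = (a j, (a j)^2) ∧ a i < a j ∧ a j < a i + ε := by
  rcases hp with ⟨k, rfl⟩ | ⟨k, rfl⟩
  · refine ⟨k, rfl, ?_, ?_⟩
    · by_contra h
      push Not at h
      dsimp only at hbelow
      nlinarith [mul_nonneg (sub_nonneg.2 h) hε.le, sq_nonneg (a k - a i)]
    · by_contra h
      push Not at h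
      dsimp only at hbelow
      nlinarith [mul_nonneg (show 0 ≤ a k - a i - ε by linarith) (show 0 ≤ a k - a i by linarith)]
  · exfalso
    dsimp only at hbelow
    nlinarith [sq_nonneg (a k - a i)]
end

section
/- Let n ≥ 1, let a : Fin n → ℝ, let ε > 0, and suppose there exist indices i, j with a j = a i + ε. Then T_i lies in the open segment between L_i and L_j, and is distinct from both; consequently T_i ∈ convexHull ℝ S(a, ε) but T_i is not an extreme point of convexHull ℝ S(a, ε). -/
theorem Ti_in_open_segment_when_eq (n : ℕ) (hn : 1 ≤ n) (a : Fin n → ℝ) (ε : ℝ)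
    (hε : 0 < ε) (i j : Fin n) (hij : a j = a i + ε) :
    ((a i + ε/2, (a i + ε/2)^2 + ε^2/4) : ℝ × ℝ) ∈
      openSegment ℝ ((a i, (a i)^2) : ℝ × ℝ) ((a j, (a j)^2) : ℝ × ℝ) ∧
    ((a i + ε/2, (a i + ε/2)^2 + ε^2/4) : ℝ × ℝ) ≠ ((a i, (a i)^2) : ℝ × ℝ) ∧
    ((a i + ε/2, (a i + ε/2)^2 + ε^2/4) : ℝ × ℝ) ≠ ((a j, (a j)^2) : ℝ × ℝ) ∧
    ((a i + ε/2, (a i + ε/2)^2 + ε^2/4) : ℝ × ℝ) ∈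
      convexHull ℝ ({q : ℝ × ℝ | ∃ k : Fin n, q = (a k, (a k)^2)} ∪
        {q : ℝ × ℝ | ∃ k : Fin n, q = (a k + ε/2, (a k + ε/2)^2 + ε^2/4)}) ∧
    ((a i + ε/2, (a i + ε/2)^2 + ε^2/4) : ℝ × ℝ) ∉
      Set.extremePoints ℝ (convexHull ℝ
        ({q : ℝ × ℝ | ∃ k : Fin n, q = (a k, (a k)^2)} ∪
         {q : ℝ × ℝ | ∃ k : Fin n, q = (a k + ε/2, (a k + ε/2)^2 + ε^2/4)})) := by
  have h1 : ((a i + ε/2, (a i + ε/2)^2 + ε^2/4) : ℝ × ℝ) ∈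
      openSegment ℝ ((a i, (a i)^2) : ℝ × ℝ) ((a j, (a j)^2) : ℝ × ℝ) := by
    refine ⟨1/2, 1/2, by norm_num, by norm_num, by norm_num, ?_⟩
    rw [hij]
    ext
    · simp only [Prod.smul_mk, Prod.mk_add_mk, smul_eq_mul]; ring
    · simp only [Prod.smul_mk, Prod.mk_add_mk, smul_eq_mul]; ring
  have h2 : ((a i + ε/2, (a i + ε/2)^2 + ε^2/4) : ℝ × ℝ) ≠ ((a i, (a i)^2) : ℝ × ℝ) := by
    intro h
    have := congrArg Prod.fst h
    simp only at this
    linarith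
  have h3 : ((a i + ε/2, (a i + ε/2)^2 + ε^2/4) : ℝ × ℝ) ≠ ((a j, (a j)^2) : ℝ × ℝ) := by
    intro h
    have := congrArg Prod.fst h
    simp only at this
    linarith
  refine ⟨h1, h2, h3, subset_convexHull ℝ _ (Or.inr ⟨i, rfl⟩), fun h => ?_⟩
  exact h2 (h.2 (subset_convexHull ℝ _ (Or.inl ⟨i, rfl⟩))
    (subset_convexHull ℝ _ (Or.inl ⟨j, rfl⟩)) h1).symm
end

section
/- Let n ≥ 1, let a : Fin n → ℝ, let ε > 0, and fix an index i. If there is no index j with a i < a j ≤ a i + ε, then the intersection of S(a, ε) with the line ℓ_i through L_i with slope 2·(a i) + ε is exactly the two-point set {L_i, T_i}. -/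
theorem line_meets_S_in_exactly_two_points (n : ℕ) (hn : 1 ≤ n) (a : Fin n → ℝ)
    (ε : ℝ) (hε : 0 < ε) (i : Fin n)
    (h : ¬∃ j : Fin n, a i < a j ∧ a j ≤ a i + ε) :
    (({q : ℝ × ℝ | ∃ k : Fin n, q = (a k, (a k)^2)} ∪
      {q : ℝ × ℝ | ∃ k : Fin n, q = (a k + ε/2, (a k + ε/2)^2 + ε^2/4)}) ∩
     {q : ℝ × ℝ | q.2 = (a i)^2 + (2 * a i + ε) * (q.1 - a i)}) =
    {((a i, (a i)^2) : ℝ × ℝ), ((a i + ε/2, (a i + ε/2)^2 + ε^2/4) : ℝ × ℝ)} := by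
  ext q
  simp only [Set.mem_inter_iff, Set.mem_union, Set.mem_setOf_eq, Set.mem_insert_iff,
    Set.mem_singleton_iff]
  constructor
  · rintro ⟨⟨k, rfl⟩ | ⟨k, rfl⟩, hq⟩
    · left
      have h1 : (a k - a i) * (a k - a i - ε) = 0 := by
        simp only at hq
        linear_combination hq
      rcases mul_eq_zero.mp h1 with h2 | h2
      · have h3 : a k = a i := by linarith
        rw [h3]
      · exact absurd ⟨k, by linarith, by linarith⟩ h
    · right
      have h1 : (a k - a i) ^ 2 = 0 := by
        simp only at hq
        linear_combination hq
      have h3 : a k = a i := by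
        have := pow_eq_zero_iff (two_ne_zero) |>.mp h1
        linarith
      rw [h3]
  · rintro (rfl | rfl)
    · exact ⟨Or.inl ⟨i, rfl⟩, by simp⟩
    · exact ⟨Or.inr ⟨i, rfl⟩, by simp only; ring⟩
end
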